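/- Let P be a POVM with finite outcome set E on ℂ^d each of whose elements P_e has rank one. Then P is extremal if and only if the family of matrices {P_e}_{e∈E} is linearly independent over ℂ. -/

import Mathlib

/-!
POVMs are the families of nonnegative elements with sum `1` in the Loewner-ordered space of
matrices. For nonnegative families `P` with a prescribed sum in any ordered vector space, a linear
relation `∑ cₑ • Pₑ = 0` gives the perturbations `(1 ± ε cₑ) • Pₑ` of `P`, so an extreme point with
nonzero members satisfies no such relation. Conversely, if every `Pₑ` spans an extreme ray, then
every family `Q` in an open segment around `P` satisfies `Qₑ = cₑ • Pₑ`, and comparing the sums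
gives the relation `∑ (cₑ - 1) • Pₑ = 0`.

A positive semidefinite `A` of rank one spans an extreme ray: if `0 ≤ Q ≤ A` and `t = tr A`, then
`A * A = t • A`, so `A`, and hence `Q`, kills the columns of `t - A`. Thus `t • Q = Q * A = A * Q`,
and `t² • Q = A * Q * A` is a multiple of `A`. Finally, a relation between self-adjoint elements
splits into its real and its imaginary part, so independence over `ℝ` and over `ℂ` agree.
-/

open Matrix
open scoped ComplexOrder

/-- A POVM with finite outcome set `E` on `ℂ^d`: a family of positive semidefinite
matrices summing to the identity. -/
def IsPOVM {d : ℕ} {E : Type*} [Fintype E] (P : E → Matrix (Fin d) (Fin d) ℂ) : Prop :=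
  (∀ e, (P e).PosSemidef) ∧ ∑ e, P e = 1

/-- A POVM is extremal if it is an extreme point of the convex set of POVMs
inside the real vector space of families `E → M_d(ℂ)`. -/
def IsExtremalPOVM {d : ℕ} {E : Type*} [Fintype E] (P : E → Matrix (Fin d) (Fin d) ℂ) : Prop :=
  P ∈ Set.extremePoints ℝ {Q : E → Matrix (Fin d) (Fin d) ℂ | IsPOVM Q}

section Perturbation

variable {𝕜 : Type*} [Field 𝕜] [LinearOrder 𝕜] [IsStrictOrderedRing 𝕜]

lemma eq_zero_of_mem_extremePoints_of_add_mem_of_sub_mem {V : Type*} [AddCommGroup V]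
    [Module 𝕜 V] {S : Set V} {x y : V} (hx : x ∈ S.extremePoints 𝕜) (hadd : x + y ∈ S)
    (hsub : x - y ∈ S) : y = 0 :=
  add_eq_left.1 <| (mem_extremePoints.1 hx).2 _ hsub _ hadd (mem_openSegment_sub_add x y) |>.2

lemma exists_pos_forall_abs_mul_le_one {ι : Type*} [Finite ι] (c : ι → 𝕜) :
    ∃ ε > 0, ∀ i, |ε * c i| ≤ 1 := by
  obtain ⟨M, hM⟩ := Finite.exists_le fun i => |c i|
  have hpos : 0 < |M| + 1 := by positivity
  refine ⟨(|M| + 1)⁻¹, inv_pos.2 hpos, fun i => ?_⟩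
  rw [abs_mul, abs_of_pos (inv_pos.2 hpos), inv_mul_le_iff₀ hpos, mul_one]
  linarith [hM i, le_abs_self M]

end Perturbation

section ExtremePoints

variable {𝕜 V E : Type*} [Field 𝕜] [AddCommGroup V] [PartialOrder V] [Fintype E]

/-- The resolutions of `s` into nonnegative summands indexed by `E`. With `s = 1` in the
Loewner-ordered matrices these are the POVMs with outcome set `E`. -/
def positiveResolutions (E : Type*) [Fintype E] (s : V) : Set (E → V) :=
  {P | (∀ e, 0 ≤ P e) ∧ ∑ e, P e = s}

variable [Module 𝕜 V] {s : V} {P : E → V}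

section Sufficiency

variable [PartialOrder 𝕜] [PosSMulMono 𝕜 V] [IsOrderedAddMonoid V]

lemma mem_span_of_smul_add_smul_eq {x y z : V} (hx : Set.Icc 0 x ⊆ (𝕜 ∙ x : Submodule 𝕜 V))
    (hy : 0 ≤ y) (hz : 0 ≤ z) {a b : 𝕜} (ha : 0 < a) (hb : 0 ≤ b) (h : a • y + b • z = x) :
    y ∈ 𝕜 ∙ x := by
  have hle : a • y ≤ x := h ▸ le_add_of_nonneg_right (smul_nonneg hb hz)
  exact (Submodule.smul_mem_iff _ ha.ne').1 (hx ⟨smul_nonneg ha.le hy, hle⟩)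

lemma mem_extremePoints_positiveResolutions_of_linearIndependent
    (hP : P ∈ positiveResolutions E s)
    (hray : ∀ e, Set.Icc 0 (P e) ⊆ (𝕜 ∙ P e : Submodule 𝕜 V)) (hli : LinearIndependent 𝕜 P) :
    P ∈ (positiveResolutions E s).extremePoints 𝕜 := by
  refine mem_extremePoints_iff_left.2 ⟨hP, ?_⟩
  rintro Q hQ R hR ⟨a, b, ha, hb, -, hab⟩
  have hmem e : Q e ∈ 𝕜 ∙ P e :=
    mem_span_of_smul_add_smul_eq (hray e) (hQ.1 e) (hR.1 e) ha hb.le (congrFun hab e)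
  choose c hc using fun e => Submodule.mem_span_singleton.1 (hmem e)
  have hsum : ∑ e, (c e - 1) • P e = 0 := by
    simp only [sub_smul, one_smul, hc, Finset.sum_sub_distrib, hQ.2, hP.2, sub_self]
  funext e
  rw [← hc e, sub_eq_zero.1 (Fintype.linearIndependent_iff.1 hli _ hsum e), one_smul]

end Sufficiency

variable [LinearOrder 𝕜] [IsStrictOrderedRing 𝕜] [PosSMulMono 𝕜 V]

lemma add_smul_mem_positiveResolutions (hP : P ∈ positiveResolutions E s) {c : E → 𝕜}
    (hc : ∀ e, -1 ≤ c e) (hsum : ∑ e, c e • P e = 0) :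
    P + (fun e => c e • P e) ∈ positiveResolutions E s := by
  refine ⟨fun e => ?_, ?_⟩
  · have hnonneg : 0 ≤ (1 + c e) • P e := smul_nonneg (by linarith [hc e]) (hP.1 e)
    rwa [add_smul, one_smul] at hnonneg
  · simp only [Pi.add_apply, Finset.sum_add_distrib, hsum, hP.2, add_zero]

lemma linearIndependent_of_mem_extremePoints_positiveResolutions
    (hP : P ∈ (positiveResolutions E s).extremePoints 𝕜) (hne : ∀ e, P e ≠ 0) :
    LinearIndependent 𝕜 P := by
  refine Fintype.linearIndependent_iff.2 fun c hc e => ?_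
  obtain ⟨ε, hε, hεc⟩ := exists_pos_forall_abs_mul_le_one c
  have hsum : ∑ e, (ε * c e) • P e = 0 := by
    simp only [mul_smul, ← Finset.smul_sum, hc, smul_zero]
  have hadd := add_smul_mem_positiveResolutions hP.1 (fun e => (abs_le.1 (hεc e)).1) hsum
  have hsub : P - (fun e => (ε * c e) • P e) ∈ positiveResolutions E s := by
    have hneg := add_smul_mem_positiveResolutions hP.1 (c := fun e => -(ε * c e))
      (fun e => neg_le_neg (abs_le.1 (hεc e)).2)
      (by simp only [neg_smul, Finset.sum_neg_distrib, hsum, neg_zero])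
    simpa only [neg_smul, ← Pi.neg_def, ← sub_eq_add_neg] using hneg
  have hzero : (ε * c e) • P e = 0 :=
    congrFun (eq_zero_of_mem_extremePoints_of_add_mem_of_sub_mem hP hadd hsub) e
  exact (mul_eq_zero.1 ((smul_eq_zero.1 hzero).resolve_right (hne e))).resolve_left hε.ne'

theorem mem_extremePoints_positiveResolutions_iff [IsOrderedAddMonoid V]
    (hP : P ∈ positiveResolutions E s) (hne : ∀ e, P e ≠ 0)
    (hray : ∀ e, Set.Icc 0 (P e) ⊆ (𝕜 ∙ P e : Submodule 𝕜 V)) :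
    P ∈ (positiveResolutions E s).extremePoints 𝕜 ↔ LinearIndependent 𝕜 P :=
  ⟨fun hext => linearIndependent_of_mem_extremePoints_positiveResolutions hext hne,
    mem_extremePoints_positiveResolutions_of_linearIndependent hP hray⟩

end ExtremePoints

section RankOne

lemma exists_eq_vecMulVec_of_rank_le_one {K m n : Type*} [Field K] [Finite m] [Fintype n]
    {A : Matrix m n K} (hA : A.rank ≤ 1) : ∃ u v, A = vecMulVec u v := by
  rw [rank_eq_finrank_span_cols, finrank_le_one_iff] at hA
  obtain ⟨⟨u, _⟩, hu⟩ := hA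
  choose v hv using fun j => hu ⟨A.col j, Submodule.subset_span ⟨j, rfl⟩⟩
  refine ⟨u, v, Matrix.ext fun i j => ?_⟩
  have hcol : v j • u = A.col j := congrArg Subtype.val (hv j)
  rw [vecMulVec_apply, mul_comm]
  exact (congrFun hcol i).symm

lemma mul_mul_self_eq_trace_smul_of_rank_le_one {K m n : Type*} [Field K] [Fintype m] [Fintype n]
    {A : Matrix m n K} (hA : A.rank ≤ 1) (M : Matrix n m K) :
    A * M * A = (A * M).trace • A := by
  obtain ⟨u, v, rfl⟩ := exists_eq_vecMulVec_of_rank_le_one hA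
  rw [vecMulVec_mul, vecMulVec_mul_vecMulVec, trace_vecMulVec, vecMulVec_smul, dotProduct_comm]

open scoped MatrixOrder

variable {𝕜 n : Type*} [RCLike 𝕜] [Fintype n] {A Q : Matrix n n 𝕜}

lemma mulVec_eq_zero_of_nonneg_of_le {x : n → 𝕜} (hQ : 0 ≤ Q) (hQA : Q ≤ A)
    (hAx : A *ᵥ x = 0) : Q *ᵥ x = 0 := by
  have hle : 0 ≤ star x ⬝ᵥ (A - Q) *ᵥ x := (le_iff.1 hQA).dotProduct_mulVec_nonneg x
  rw [sub_mulVec, hAx, zero_sub, dotProduct_neg, neg_nonneg] at hle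
  exact (hQ.posSemidef.dotProduct_mulVec_zero_iff x).1
    (hle.antisymm (hQ.posSemidef.dotProduct_mulVec_nonneg x))

lemma mul_eq_trace_smul_of_nonneg_of_le (hA : A.rank ≤ 1) (hQ : 0 ≤ Q) (hQA : Q ≤ A) :
    Q * A = A.trace • Q := by
  classical
  have hAA : A * A = A.trace • A := by
    simpa only [Matrix.mul_one] using mul_mul_self_eq_trace_smul_of_rank_le_one hA 1
  refine mulVec_injective (funext fun x => ?_)
  have hker : A *ᵥ (A *ᵥ x - A.trace • x) = 0 := by
    rw [mulVec_sub, mulVec_mulVec, hAA, smul_mulVec, mulVec_smul, sub_self]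
  have hkerQ := mulVec_eq_zero_of_nonneg_of_le hQ hQA hker
  rwa [mulVec_sub, mulVec_mulVec, mulVec_smul, ← smul_mulVec, sub_eq_zero] at hkerQ

lemma trace_smul_eq_trace_smul_of_nonneg_of_le (hA : A.rank ≤ 1) (hQ : 0 ≤ Q) (hQA : Q ≤ A) :
    A.trace • Q = Q.trace • A := by
  have hApos : A.PosSemidef := (hQ.trans hQA).posSemidef
  obtain hA₀ | hA₀ := eq_or_ne A.trace 0
  · obtain rfl : A = 0 := hApos.trace_eq_zero_iff.1 hA₀
    simp [hQA.antisymm hQ]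
  have hQmul : Q * A = A.trace • Q := mul_eq_trace_smul_of_nonneg_of_le hA hQ hQA
  have hmulQ : A * Q = A.trace • Q := by
    have hstar := congrArg conjTranspose hQmul
    rwa [conjTranspose_mul, conjTranspose_smul, hQ.posSemidef.isHermitian.eq,
      hApos.isHermitian.eq, ← trace_conjTranspose, hApos.isHermitian.eq] at hstar
  apply smul_right_injective _ hA₀
  calc A.trace • A.trace • Q = A * Q * A := by rw [hmulQ, Matrix.smul_mul, hQmul]
    _ = (A * Q).trace • A := mul_mul_self_eq_trace_smul_of_rank_le_one hA Q
    _ = A.trace • Q.trace • A := by rw [hmulQ, trace_smul, smul_assoc]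

lemma Icc_zero_subset_span_of_rank_le_one (hA : A.rank ≤ 1) :
    Set.Icc 0 A ⊆ (ℝ ∙ A : Submodule ℝ (Matrix n n 𝕜)) := by
  rintro Q ⟨hQ, hQA⟩
  have hApos : A.PosSemidef := (hQ.trans hQA).posSemidef
  obtain ⟨a, -, ha⟩ := RCLike.nonneg_iff_exists_ofReal.1 hApos.trace_nonneg
  obtain ⟨q, -, hq⟩ := RCLike.nonneg_iff_exists_ofReal.1 hQ.posSemidef.trace_nonneg
  have hsmul : a • Q = q • A := by
    rw [RCLike.real_smul_eq_coe_smul (K := 𝕜), RCLike.real_smul_eq_coe_smul (K := 𝕜), ha, hq]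
    exact trace_smul_eq_trace_smul_of_nonneg_of_le hA hQ hQA
  obtain rfl | ha₀ := eq_or_ne a 0
  · obtain rfl : A = 0 := hApos.trace_eq_zero_iff.1 (by simpa using ha.symm)
    simp [hQA.antisymm hQ]
  · exact (Submodule.smul_mem_iff _ ha₀).1
      (hsmul ▸ Submodule.smul_mem _ q (Submodule.mem_span_singleton_self A))

end RankOne

open ComplexStarModule in
lemma linearIndependent_complex_iff_real_of_isSelfAdjoint {ι A : Type*} [AddCommGroup A]
    [Module ℂ A] [StarAddMonoid A] [StarModule ℂ A] {v : ι → A} (hv : ∀ i, IsSelfAdjoint (v i)) :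
    LinearIndependent ℂ v ↔ LinearIndependent ℝ v := by
  refine ⟨fun h => h.restrict_scalars' ℝ, fun h => linearIndependent_iff'.2 fun s c hc i hi => ?_⟩
  have hre : ∑ j ∈ s, (c j).re • v j = 0 := by
    simpa [realPart_smul, (hv _).coe_realPart, (hv _).imaginaryPart] using
      congrArg (fun x => (ℜ x : A)) hc
  have him : ∑ j ∈ s, (c j).im • v j = 0 := by
    simpa [imaginaryPart_smul, (hv _).coe_realPart, (hv _).imaginaryPart] using
      congrArg (fun x => (ℑ x : A)) hc
  exact Complex.ext (linearIndependent_iff'.1 h s _ hre i hi)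
    (linearIndependent_iff'.1 h s _ him i hi)

section POVM

open scoped MatrixOrder

theorem stmt9_general {n E : Type*} [Fintype n] [Fintype E] {S : Matrix n n ℂ}
    {P : E → Matrix n n ℂ} (hP : P ∈ positiveResolutions E S) (hrank : ∀ e, (P e).rank = 1) :
    P ∈ (positiveResolutions E S).extremePoints ℝ ↔ LinearIndependent ℂ P := by
  have hne e : P e ≠ 0 := fun h => by simpa [h] using hrank e
  have hsa e : IsSelfAdjoint (P e) := (hP.1 e).posSemidef.isHermitian
  rw [linearIndependent_complex_iff_real_of_isSelfAdjoint hsa]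
  exact mem_extremePoints_positiveResolutions_iff hP hne
    fun e => Icc_zero_subset_span_of_rank_le_one (hrank e).le

variable {d : ℕ} {E : Type*} [Fintype E] {P : E → Matrix (Fin d) (Fin d) ℂ}

lemma isPOVM_iff_mem_positiveResolutions : IsPOVM P ↔ P ∈ positiveResolutions E 1 :=
  and_congr_left' (forall_congr' fun _ => nonneg_iff_posSemidef.symm)

lemma isExtremalPOVM_iff_mem_extremePoints_positiveResolutions :
    IsExtremalPOVM P ↔ P ∈ (positiveResolutions E 1).extremePoints ℝ := by
  simp only [IsExtremalPOVM, isPOVM_iff_mem_positiveResolutions, Set.ofPred_mem_eq]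

end POVM

theorem stmt9 {d : ℕ} (hd : 1 ≤ d) {E : Type*} [Fintype E]
    (P : E → Matrix (Fin d) (Fin d) ℂ) (hP : IsPOVM P)
    (hrank : ∀ e, (P e).rank = 1) :
    IsExtremalPOVM P ↔ LinearIndependent ℂ P :=
  isExtremalPOVM_iff_mem_extremePoints_positiveResolutions.trans
    (stmt9_general (isPOVM_iff_mem_positiveResolutions.1 hP) hrank)
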